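/- There exists a constant c > 0 such that every C₅-free graph G with n > 1 vertices contains an induced subgraph that is a cograph with at least 2^{c·√(log n · log log n)} vertices. -/

import Mathlib

open SimpleGraph

/-- `G` is `C₅`-free: no induced subgraph of `G` is isomorphic to the 5-cycle. -/
def C5Free {V : Type} (G : SimpleGraph V) : Prop :=
  ¬ Nonempty (cycleGraph 5 ↪g G)

/-- A cograph is a graph with no induced path on 4 vertices. -/
def IsCograph {V : Type} (G : SimpleGraph V) : Prop :=
  ¬ Nonempty (pathGraph 4 ↪g G)

/-!
If `G` has no induced copy of a fixed graph, then `G` or its complement has a one-sided sparse pair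
of linear size, by embedding that graph greedily. Iterating, Ramsey-style, gives three pairwise
sparse blocks `Z`, `X`, `Y` of linear size, in `G` say, for a fixed absolute sparsity. Suppose that
there is no `ε`-sparse pair inside these blocks. Then some `v ∈ Z` has a set of neighbours `N ⊆ Z`
covering a quarter of `X`. A subset of `N` that only just covers a quarter of `X` or of `Y` leaves
enough uncovered vertices in both to complete an induced five-cycle. So for a constant `c` and
*every* `ε`, a `C₅`-free graph or its complement has, in any vertex set `W`, an `ε`-sparse pair `A`,
`B` with `|A| ≥ εc|W|` and `|B| ≥ c|W|`.

Taking `ε = 1 / (4t)`, a cograph on `t` vertices in `A` has no neighbours in half of `B`, where one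
continues; `k` rounds multiply `t` by `k` at the cost of a factor `2 ^ O(k)` in the number of
vertices, as long as `t ≤ 2 ^ k`. Hence `2 ^ (Ckr)` vertices force a cograph on
`min (k ^ r) (2 ^ k)` vertices, and `k ≈ √(log n log log n)` is the best choice.
-/

section

open scoped Finset

universe u

variable {V : Type u} {G : SimpleGraph V}

/-! ### Induced five-cycles and cographs -/

lemma cycleGraph_five_isIndContained {a b c d e : V} (hab : G.Adj a b) (hbc : G.Adj b c)
    (hcd : G.Adj c d) (hde : G.Adj d e) (hea : G.Adj e a) (hac : ¬G.Adj a c) (hbd : ¬G.Adj b d)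
    (hce : ¬G.Adj c e) (hda : ¬G.Adj d a) (heb : ¬G.Adj e b) : cycleGraph 5 ⊴ G := by
  have adj_iff (i j : Fin 5) :
      G.Adj (![a, b, c, d, e] i) (![a, b, c, d, e] j) ↔ (cycleGraph 5).Adj i j := by
    fin_cases i <;> fin_cases j <;>
      simp +decide [G.adj_comm b a, G.adj_comm c b, G.adj_comm d c,
        G.adj_comm e d, G.adj_comm a e, G.adj_comm c a, G.adj_comm d b, G.adj_comm e c,
        G.adj_comm a d, G.adj_comm b e, *]
  have eq_of_same_neighbors :
      ∀ i j, (∀ k, (cycleGraph 5).Adj i k ↔ (cycleGraph 5).Adj j k) → i = j := by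
    decide
  refine ⟨⟨⟨![a, b, c, d, e], fun i j hij ↦ eq_of_same_neighbors i j fun k ↦ ?_⟩, adj_iff _ _⟩⟩
  rw [← adj_iff, ← adj_iff, hij]

lemma cycleGraph_five_isIndContained_compl : cycleGraph 5 ⊴ (cycleGraph 5)ᶜ :=
  ⟨⟨⟨fun i ↦ 2 * i, by decide⟩, by decide⟩⟩

lemma pathGraph_four_isIndContained_compl : pathGraph 4 ⊴ (pathGraph 4)ᶜ :=
  ⟨⟨⟨![2, 0, 3, 1], by decide⟩, by simp only [compl_adj, pathGraph_adj]; decide⟩⟩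

lemma not_cycleGraph_five_isIndContained_compl (hG : ¬cycleGraph 5 ⊴ G) : ¬cycleGraph 5 ⊴ Gᶜ :=
  fun h ↦ hG (cycleGraph_five_isIndContained_compl.trans (by simpa using h.compl))

lemma isIndContained_induce_or_of_union {U : Type*} {F : SimpleGraph U} (hF : F.Preconnected)
    {s t : Set V} (hst : ∀ x ∈ s, ∀ y ∈ t, ¬G.Adj x y) (h : F ⊴ G.induce (s ∪ t)) :
    F ⊴ G.induce s ∨ F ⊴ G.induce t := by
  obtain ⟨f⟩ := h
  have restrict {r : Set V} (hr : ∀ i, (f i : V) ∈ r) : F ⊴ G.induce r :=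
    ⟨⟨⟨fun i ↦ ⟨f i, hr i⟩, fun i j hij ↦
      f.injective (Subtype.ext (Subtype.mk.inj hij))⟩, f.map_rel_iff⟩⟩
  by_cases hs : ∃ i, (f i : V) ∈ s
  · obtain ⟨i, hi⟩ := hs
    refine .inl (restrict fun j ↦ ?_)
    induction reachable_iff_reflTransGen _ _ |>.1 (hF i j) with
    | refl => exact hi
    | tail _ hadj ih => exact (f _).2.resolve_right fun ht ↦ hst _ ih _ ht (f.map_rel_iff.2 hadj)
  · exact .inr (restrict fun i ↦ (f i).2.resolve_left fun hi ↦ hs ⟨i, hi⟩)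

/-- `s` induces a cograph in `G`, i.e. a graph without induced path on four vertices. -/
def CographOn (G : SimpleGraph V) (s : Set V) : Prop :=
  ¬pathGraph 4 ⊴ G.induce s

lemma CographOn.mono {s t : Set V} (ht : CographOn G t) (hst : s ⊆ t) : CographOn G s :=
  fun h ↦ ht (h.trans ⟨G.induceHomOfLE hst⟩)

lemma CographOn.compl {s : Set V} (hs : CographOn G s) : CographOn Gᶜ s := by
  have induce_compl : (Gᶜ.induce s)ᶜ = G.induce s := by
    ext x y
    simp only [compl_adj, comap_adj, Function.Embedding.subtype_apply, Subtype.ext_iff, not_and,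
      not_not, ne_eq]
    exact ⟨fun h ↦ h.2 h.1, fun h ↦ ⟨h.ne, fun _ ↦ h⟩⟩
  exact fun h ↦ hs (pathGraph_four_isIndContained_compl.trans (induce_compl ▸ h.compl))

lemma CographOn.union {s t : Set V} (hs : CographOn G s) (ht : CographOn G t)
    (hst : ∀ x ∈ s, ∀ y ∈ t, ¬G.Adj x y) : CographOn G (s ∪ t) :=
  fun h ↦ (isIndContained_induce_or_of_union (pathGraph_preconnected 4) hst h).elim hs ht

lemma cographOn_of_card_lt_four {s : Finset V} (hs : #s < 4) : CographOn G s := by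
  rintro ⟨f⟩
  have : 4 ≤ #s := by simpa using Fintype.card_le_of_injective f f.injective
  lia

/-! ### Sparse pairs -/

open Classical in
/-- The neighbours of `x` lying in `B`. -/
noncomputable def nbrsIn (G : SimpleGraph V) (B : Finset V) (x : V) : Finset V :=
  {y ∈ B | G.Adj x y}

open Classical in
/-- The vertices of `B` covered by `T`, i.e. having a neighbour in `T`. -/
noncomputable def coveredIn (G : SimpleGraph V) (B T : Finset V) : Finset V :=
  {y ∈ B | ∃ t ∈ T, G.Adj t y}

/-- `A` is `ε`-sparse to `B`: every vertex of `A` has at most `ε|B|` neighbours in `B`. The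
condition is one-sided, and `A` and `B` need not be disjoint. -/
def SparseTo (G : SimpleGraph V) (ε : ℝ) (A B : Finset V) : Prop :=
  ∀ x ∈ A, (#(nbrsIn G B x) : ℝ) ≤ ε * #B

/-- Some `A, B ⊆ W` with `|A| ≥ εb` and `|B| ≥ b` are such that `A` is `ε`-sparse to `B`. -/
def HasSparsePair (G : SimpleGraph V) (W : Finset V) (ε b : ℝ) : Prop :=
  ∃ A ⊆ W, ∃ B ⊆ W, ε * b ≤ #A ∧ b ≤ #B ∧ SparseTo G ε A B

lemma mem_nbrsIn {B : Finset V} {x y : V} : y ∈ nbrsIn G B x ↔ y ∈ B ∧ G.Adj x y := by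
  simp only [nbrsIn, Finset.mem_filter]

lemma nbrsIn_subset {B : Finset V} {x : V} : nbrsIn G B x ⊆ B :=
  fun _ hy ↦ (mem_nbrsIn.1 hy).1

lemma nbrsIn_mono {B C : Finset V} (hBC : B ⊆ C) (x : V) : nbrsIn G B x ⊆ nbrsIn G C x :=
  fun _ hy ↦ mem_nbrsIn.2 ((mem_nbrsIn.1 hy).imp_left fun h ↦ hBC h)

lemma mem_coveredIn {B T : Finset V} {y : V} :
    y ∈ coveredIn G B T ↔ y ∈ B ∧ ∃ t ∈ T, G.Adj t y := by
  simp only [coveredIn, Finset.mem_filter]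

lemma coveredIn_subset {B T : Finset V} : coveredIn G B T ⊆ B :=
  fun _ hy ↦ (mem_coveredIn.1 hy).1

lemma coveredIn_empty (B : Finset V) : coveredIn G B ∅ = ∅ := by
  simp [coveredIn]

lemma coveredIn_union [DecidableEq V] (B S T : Finset V) :
    coveredIn G B (S ∪ T) = coveredIn G B S ∪ coveredIn G B T := by
  ext y
  simp only [mem_coveredIn, Finset.mem_union]
  grind

lemma coveredIn_insert [DecidableEq V] (B T : Finset V) (t : V) :
    coveredIn G B (insert t T) = nbrsIn G B t ∪ coveredIn G B T := by
  ext y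
  simp only [mem_coveredIn, mem_nbrsIn, Finset.mem_union]
  grind

lemma SparseTo.mono_left {ε : ℝ} {A A' B : Finset V} (h : SparseTo G ε A B) (hA : A' ⊆ A) :
    SparseTo G ε A' B :=
  fun x hx ↦ h x (hA hx)

lemma SparseTo.subset_right {α β : ℝ} {A B B' : Finset V} (h : SparseTo G α A B) (hB : B' ⊆ B)
    (hcard : α * #B ≤ β * #B') : SparseTo G β A B' := fun x hx ↦
  calc (#(nbrsIn G B' x) : ℝ) ≤ #(nbrsIn G B x) := mod_cast Finset.card_le_card (nbrsIn_mono hB x)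
    _ ≤ α * #B := h x hx
    _ ≤ β * #B' := hcard

lemma SparseTo.card_coveredIn_le {ε : ℝ} {A B : Finset V} (h : SparseTo G ε A B) :
    (#(coveredIn G B A) : ℝ) ≤ #A * (ε * #B) := by
  classical
  have covered_eq : coveredIn G B A = A.biUnion (nbrsIn G B) := by
    ext y
    simp only [mem_coveredIn, Finset.mem_biUnion, mem_nbrsIn]
    grind
  calc (#(coveredIn G B A) : ℝ) ≤ ∑ x ∈ A, (#(nbrsIn G B x) : ℝ) := by
        rw [covered_eq]
        exact_mod_cast Finset.card_biUnion_le
    _ ≤ #A • (ε * #B) := Finset.sum_le_card_nsmul _ _ _ h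
    _ = #A * (ε * #B) := nsmul_eq_mul _ _

lemma SparseTo.exists_subset_sparseTo_symm {α β : ℝ} {A B : Finset V} (h : SparseTo G α A B)
    (hA : A.Nonempty) (hβ : 0 < β) :
    ∃ B' ⊆ B, (1 - α / β) * #B ≤ #B' ∧ SparseTo G β B' A := by
  classical
  refine ⟨{y ∈ B | (#(nbrsIn G A y) : ℝ) ≤ β * #A}, Finset.filter_subset _ _, ?_,
    fun y hy ↦ (Finset.mem_filter.1 hy).2⟩
  set bad := {y ∈ B | ¬(#(nbrsIn G A y) : ℝ) ≤ β * #A}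
  have card_split : (#{y ∈ B | (#(nbrsIn G A y) : ℝ) ≤ β * #A} : ℝ) + #bad = #B :=
    mod_cast Finset.card_filter_add_card_filter_not _
  have double_count : #bad • (β * #A) ≤ #A • (α * #B) := by
    refine Finset.card_nsmul_le_card_nsmul G.Adj
      (fun y hy ↦ (not_le.1 (Finset.mem_filter.1 hy).2).le) fun x hx ↦ (h x hx).trans' ?_
    refine mod_cast Finset.card_le_card fun y hy ↦ ?_
    rw [Finset.mem_bipartiteBelow] at hy
    exact mem_nbrsIn.2 ⟨Finset.filter_subset _ _ hy.1, hy.2.symm⟩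
  have hA0 : (0 : ℝ) < #A := mod_cast hA.card_pos
  have card_bad : (#bad : ℝ) ≤ α / β * #B := by
    rw [div_mul_eq_mul_div, le_div_iff₀ hβ]
    simp only [nsmul_eq_mul] at double_count
    exact le_of_mul_le_mul_right (by linarith) hA0
  linarith

lemma pos_of_not_hasSparsePair {W : Finset V} {ε b : ℝ} (hG : ¬HasSparsePair G W ε b)
    (hε : 0 ≤ ε) : 0 < b := by
  by_contra! hb
  exact hG ⟨∅, by simp, ∅, by simp, by simpa using mul_nonpos_of_nonneg_of_nonpos hε hb,
    by simpa, by simp [SparseTo]⟩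

lemma exists_card_nbrsIn_gt_of_not_hasSparsePair {W A B : Finset V} {ε b : ℝ}
    (hG : ¬HasSparsePair G W ε b) (hA : A ⊆ W) (hB : B ⊆ W) (hAb : ε * b ≤ #A) (hBb : b ≤ #B) :
    ∃ x ∈ A, ε * #B < #(nbrsIn G B x) := by
  by_contra! hsparse
  exact hG ⟨A, hA, B, hB, hAb, hBb, hsparse⟩

lemma exists_adj_of_not_hasSparsePair {W A B : Finset V} {ε b : ℝ}
    (hG : ¬HasSparsePair G W ε b) (hε : 0 ≤ ε) (hA : A ⊆ W) (hB : B ⊆ W) (hAb : ε * b ≤ #A)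
    (hBb : b ≤ #B) : ∃ x ∈ A, ∃ y ∈ B, G.Adj x y := by
  obtain ⟨x, hx, hlt⟩ := exists_card_nbrsIn_gt_of_not_hasSparsePair hG hA hB hAb hBb
  have hpos : 0 < #(nbrsIn G B x) := mod_cast (by positivity : 0 ≤ ε * #B).trans_lt hlt
  obtain ⟨y, hy⟩ := Finset.card_pos.1 hpos
  exact ⟨x, hx, y, mem_nbrsIn.1 hy⟩

/-! ### Embedding a fixed graph -/

lemma exists_forall_card_nbrsIn_gt {ι : Type*} [Fintype ι] {H : ι → SimpleGraph V}
    {W X : Finset V} {Y : ι → Finset V} {ε b : ℝ} (hH : ∀ i, ¬HasSparsePair (H i) W ε b)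
    (hε : ε ≤ 1) (hb : 0 < b) (hX : X ⊆ W) (hXb : (Fintype.card ι + 1) * b ≤ #X)
    (hY : ∀ i, Y i ⊆ W) (hYb : ∀ i, b ≤ #(Y i)) :
    ∃ x ∈ X, ∀ i, ε * #(Y i) < #(nbrsIn (H i) (Y i) x) := by
  classical
  by_contra! hbad
  let bad (i : ι) : Finset V := {x ∈ X | (#(nbrsIn (H i) (Y i) x) : ℝ) ≤ ε * #(Y i)}
  have card_bad (i : ι) : (#(bad i) : ℝ) ≤ b := by
    by_contra! hlt
    exact hH i ⟨bad i, (Finset.filter_subset _ _).trans hX, Y i, hY i, by nlinarith, hYb i,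
      fun x hx ↦ (Finset.mem_filter.1 hx).2⟩
  have X_subset : X ⊆ Finset.univ.biUnion bad := fun x hx ↦ by
    simpa [bad, hx] using hbad x hx
  have : (#X : ℝ) ≤ Fintype.card ι * b :=
    calc (#X : ℝ) ≤ ∑ i, (#(bad i) : ℝ) :=
          mod_cast (Finset.card_le_card X_subset).trans Finset.card_biUnion_le
      _ ≤ #(Finset.univ : Finset ι) • b := Finset.sum_le_card_nsmul _ _ _ fun i _ ↦ card_bad i
      _ = Fintype.card ι * b := nsmul_eq_mul _ _
  linarith

lemma exists_cons_embedding {k : ℕ} (F : SimpleGraph (Fin (k + 1))) {x : V}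
    (f : F.comap Fin.succ ↪g G)
    (hne : ∀ i, f i ≠ x) (hadj : ∀ i, G.Adj x (f i) ↔ F.Adj 0 (Fin.succ i)) :
    ∃ g : F ↪g G, g 0 = x ∧ ∀ i, g (Fin.succ i) = f i := by
  refine ⟨⟨⟨Fin.cons x f, Fin.cons_injective_iff.2 ⟨?_, f.injective⟩⟩, @fun i j ↦ ?_⟩,
    rfl, fun i ↦ rfl⟩
  · rintro ⟨i, hi⟩
    exact hne i hi
  · change G.Adj (Fin.cons (α := fun _ ↦ V) x f i) (Fin.cons (α := fun _ ↦ V) x f j) ↔ F.Adj i j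
    cases i using Fin.cases <;> cases j using Fin.cases
    · simp
    · simpa using hadj _
    · simpa [G.adj_comm, F.adj_comm] using hadj _
    · simp

lemma exists_embedding_of_not_hasSparsePair {k : ℕ} (F : SimpleGraph (Fin k)) {W : Finset V}
    {ε b : ℝ} (hε0 : 0 < ε) (hε1 : ε ≤ 1) (hb : 0 < b) (hG : ¬HasSparsePair G W ε b)
    (hGc : ¬HasSparsePair Gᶜ W ε b) (S : Fin k → Finset V) (hSW : ∀ i, S i ⊆ W)
    (hS : ∀ i, k * b ≤ ε ^ k * #(S i)) : ∃ f : F ↪g G, ∀ i, f i ∈ S i := by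
  classical
  induction k with
  | zero => exact ⟨⟨⟨Fin.elim0, fun i ↦ i.elim0⟩, @fun i ↦ i.elim0⟩, fun i ↦ i.elim0⟩
  | succ k ih =>
    push_cast at hS
    have card_S (i : Fin (k + 1)) : (k + 1) * b ≤ #(S i) :=
      (hS i).trans (mul_le_of_le_one_left (by positivity) (pow_le_one₀ hε0.le hε1))
    have le_card_S (i : Fin (k + 1)) : b ≤ #(S i) := by
      have : 0 ≤ k * b := by positivity
      linarith [card_S i]
    let H (i : Fin k) : SimpleGraph V := if F.Adj 0 i.succ then G else Gᶜ
    obtain ⟨x, hx, hxS⟩ : ∃ x ∈ S 0, ∀ i : Fin k, ε * #(S i.succ) < #(nbrsIn (H i) (S i.succ) x) :=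
      exists_forall_card_nbrsIn_gt (fun i ↦ by simp only [H]; split_ifs <;> assumption) hε1 hb
        (hSW 0) (by simpa using card_S 0) (fun i ↦ hSW i.succ) fun i ↦ le_card_S i.succ
    obtain ⟨f, hf⟩ := ih (F.comap Fin.succ) (fun i ↦ nbrsIn (H i) (S i.succ) x)
      (fun i ↦ nbrsIn_subset.trans (hSW _)) fun i ↦
      calc k * b ≤ (k + 1) * b := by linarith
        _ ≤ ε ^ k * (ε * #(S i.succ)) := by rw [← mul_assoc, ← pow_succ]; exact hS i.succ
        _ ≤ ε ^ k * #(nbrsIn (H i) (S i.succ) x) := by gcongr; exact (hxS i).le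
    have adj_f (i : Fin k) : (H i).Adj x (f i) := (mem_nbrsIn.1 (hf i)).2
    obtain ⟨g, hg0, hgs⟩ := exists_cons_embedding F f (fun i ↦ (adj_f i).ne') fun i ↦ by
      have := adj_f i
      by_cases h : F.Adj 0 i.succ <;> simp_all [H]
    refine ⟨g, Fin.cases (hg0 ▸ hx) fun i ↦ ?_⟩
    rw [hgs]
    exact nbrsIn_subset (hf i)

theorem hasSparsePair_or_compl_of_not_isIndContained {k : ℕ} {F : SimpleGraph (Fin k)} {ε : ℝ}
    (hε0 : 0 < ε) (hε1 : ε ≤ 1) (hF : ¬F ⊴ G) (W : Finset V) :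
    HasSparsePair G W ε (ε ^ k / (k + 1) * #W) ∨ HasSparsePair Gᶜ W ε (ε ^ k / (k + 1) * #W) := by
  by_contra! hno
  have hb : 0 < ε ^ k / (k + 1) * #W := pos_of_not_hasSparsePair hno.1 hε0.le
  obtain ⟨f, -⟩ := exists_embedding_of_not_hasSparsePair F hε0 hε1 hb hno.1 hno.2 (fun _ ↦ W)
    (fun _ ↦ subset_rfl) fun _ ↦ by
      calc k * (ε ^ k / (k + 1) * #W) ≤ (k + 1) * (ε ^ k / (k + 1) * #W) := by gcongr; linarith
        _ = ε ^ k * #W := by field_simp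
  exact hF ⟨f⟩

/-! ### Ramsey-type blocks -/

/-- Among the subsets of `W` with at least `m` elements there are `p`, listed in order, each of
which is `δ`-sparse to all later ones. -/
def HasSparseBlocks (G : SimpleGraph V) (W : Finset V) (δ m : ℝ) (p : ℕ) : Prop :=
  ∃ l : List (Finset V), l.length = p ∧ l.Pairwise (SparseTo G δ) ∧ ∀ A ∈ l, A ⊆ W ∧ m ≤ #A

lemma HasSparseBlocks.mono {W W' : Finset V} {δ m m' : ℝ} {p : ℕ}
    (h : HasSparseBlocks G W δ m p) (hW : W ⊆ W') (hm : m' ≤ m) : HasSparseBlocks G W' δ m' p := by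
  obtain ⟨l, hlen, hsparse, hl⟩ := h
  exact ⟨l, hlen, hsparse, fun A hA ↦ ⟨(hl A hA).1.trans hW, hm.trans (hl A hA).2⟩⟩

lemma HasSparseBlocks.cons {W A B : Finset V} {δ μ m : ℝ} {p : ℕ} (hδ : 0 ≤ δ) (hA : A ⊆ W)
    (hmA : m ≤ #A) (hB : B ⊆ W) (hmB : m ≤ μ * #B) (hAB : SparseTo G (δ * μ) A B)
    (h : HasSparseBlocks G B δ (μ * #B) p) : HasSparseBlocks G W δ m (p + 1) := by
  obtain ⟨l, hlen, hsparse, hl⟩ := h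
  refine ⟨A :: l, by simp [hlen], List.pairwise_cons.2 ⟨fun C hC ↦ ?_, hsparse⟩, ?_⟩
  · refine hAB.subset_right (hl C hC).1 ?_
    rw [mul_assoc]
    exact mul_le_mul_of_nonneg_left (hl C hC).2 hδ
  · rintro C (_ | ⟨_, hC⟩)
    exacts [⟨hA, hmA⟩, ⟨(hl C hC).1.trans hB, hmB.trans (hl C hC).2⟩]

theorem exists_hasSparseBlocks_or_compl {k : ℕ} (F : SimpleGraph (Fin k)) {δ : ℝ} (hδ0 : 0 < δ)
    (hδ1 : δ ≤ 1) (p q : ℕ) :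
    ∃ c : ℝ, 0 < c ∧ c ≤ 1 ∧ ∀ {V : Type u} {G : SimpleGraph V}, ¬F ⊴ G → ∀ W : Finset V,
      HasSparseBlocks G W δ (c * #W) p ∨ HasSparseBlocks Gᶜ W δ (c * #W) q := by
  induction p generalizing q with
  | zero => exact ⟨1, one_pos, le_rfl, fun _ _ ↦ .inl ⟨[], rfl, .nil, by simp⟩⟩
  | succ p ihp =>
    induction q with
    | zero => exact ⟨1, one_pos, le_rfl, fun _ _ ↦ .inr ⟨[], rfl, .nil, by simp⟩⟩
    | succ q ihq =>
      obtain ⟨c₁, hc₁, hc₁', blocks₁⟩ := ihp (q + 1)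
      obtain ⟨c₂, hc₂, -, blocks₂⟩ := ihq
      set μ := min c₁ c₂
      have hμ0 : 0 < μ := lt_min hc₁ hc₂
      have hμ1 : μ ≤ 1 := (min_le_left _ _).trans hc₁'
      have hη1 : δ * μ ≤ 1 := mul_le_one₀ hδ1 hμ0.le hμ1
      set c₀ := (δ * μ) ^ k / (k + 1)
      have hc₀ : 0 < c₀ := by positivity
      have hc₀1 : c₀ ≤ 1 :=
        div_le_one_of_le₀ ((pow_le_one₀ (by positivity) hη1).trans (by simp)) (by positivity)
      refine ⟨δ * μ * c₀, by positivity, mul_le_one₀ hη1 hc₀.le hc₀1, fun {V G} hF W ↦ ?_⟩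
      have size_block {B : Finset V} (hB : c₀ * #W ≤ #B) : δ * μ * c₀ * #W ≤ μ * #B :=
        calc δ * μ * c₀ * #W = δ * (μ * (c₀ * #W)) := by ring
          _ ≤ 1 * (μ * #B) := by gcongr
          _ = μ * #B := one_mul _
      rcases hasSparsePair_or_compl_of_not_isIndContained (by positivity) hη1 hF W with
        ⟨A, hA, B, hB, hAcard, hBcard, hAB⟩ | ⟨A, hA, B, hB, hAcard, hBcard, hAB⟩ <;>
        rw [← mul_assoc] at hAcard
      · have hle : μ * #B ≤ c₁ * #B := by gcongr; exact min_le_left _ _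
        refine (blocks₁ hF B).imp (fun h ↦ ?_) fun h ↦ ?_
        · exact .cons hδ0.le hA hAcard hB (size_block hBcard) hAB (h.mono subset_rfl hle)
        · exact h.mono hB ((size_block hBcard).trans hle)
      · have hle : μ * #B ≤ c₂ * #B := by gcongr; exact min_le_right _ _
        refine (blocks₂ hF B).imp (fun h ↦ ?_) fun h ↦ ?_
        · exact h.mono hB ((size_block hBcard).trans hle)
        · exact .cons hδ0.le hA hAcard hB (size_block hBcard) hAB (h.mono subset_rfl hle)

/-! ### One-sided sparse pairs in graphs without induced five-cycles -/

lemma card_le_card_sdiff_union_add [DecidableEq V] (A B C : Finset V) :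
    #A ≤ #(A \ (B ∪ C)) + (#B + #C) :=
  Finset.card_le_card_sdiff_add_card.trans (Nat.add_le_add_left (Finset.card_union_le B C) _)

lemma cycleGraph_five_isIndContained_of_cover {W S T X : Finset V} {u v : V} {ε b : ℝ}
    (hG : ¬HasSparsePair G W ε b) (hε : 0 ≤ ε) (huv : G.Adj u v)
    (hT : ∀ t ∈ T, G.Adj u t ∧ ¬G.Adj v t) (hS : ∀ s ∈ S, G.Adj v s ∧ ¬G.Adj u s)
    (hTS : ∀ t ∈ T, ∀ s ∈ S, ¬G.Adj t s) (hSW : S ⊆ W) (hXW : X ⊆ W) (hSb : ε * b ≤ #S)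
    (hXb : b + #(nbrsIn G X u) + #(nbrsIn G X v) ≤ #(coveredIn G X T)) : cycleGraph 5 ⊴ G := by
  classical
  set Z := coveredIn G X T \ (nbrsIn G X u ∪ nbrsIn G X v)
  have hZb : b ≤ #Z := by
    have : (#(coveredIn G X T) : ℝ) ≤ #Z + (#(nbrsIn G X u) + #(nbrsIn G X v)) :=
      mod_cast card_le_card_sdiff_union_add _ _ _
    linarith
  obtain ⟨s, hs, z, hz, hsz⟩ := exists_adj_of_not_hasSparsePair hG hε hSW
    ((Finset.sdiff_subset.trans coveredIn_subset).trans hXW) hSb hZb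
  simp only [Finset.mem_sdiff, Finset.mem_union, mem_coveredIn, mem_nbrsIn, not_or,
    not_and] at hz
  obtain ⟨⟨hzX, t, ht, htz⟩, huz, hvz⟩ := hz
  exact cycleGraph_five_isIndContained huv (hS s hs).1 hsz htz.symm (hT t ht).1.symm (hS s hs).2
    (hvz hzX) (fun h ↦ hTS t ht s hs h.symm) (fun h ↦ huz hzX h.symm)
    (fun h ↦ (hT t ht).2 h.symm)

lemma exists_uncovered_neighbors {W A B T : Finset V} {ε b : ℝ} (hG : ¬HasSparsePair G W ε b)
    (hε : 0 ≤ ε) (hA : A ⊆ W) (hB : B ⊆ W) (hAb : ε * b ≤ #A) (w : V)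
    (hBb : b + #(coveredIn G B T) + #(nbrsIn G B w) ≤ #B) :
    ∃ x ∈ A, ∃ S ⊆ B, ε * b ≤ #S ∧
      ∀ y ∈ S, G.Adj x y ∧ ¬G.Adj w y ∧ ∀ t ∈ T, ¬G.Adj t y := by
  classical
  set B' := B \ (coveredIn G B T ∪ nbrsIn G B w)
  have hB'b : b ≤ #B' := by
    have : (#B : ℝ) ≤ #B' + (#(coveredIn G B T) + #(nbrsIn G B w)) :=
      mod_cast card_le_card_sdiff_union_add _ _ _
    linarith
  obtain ⟨x, hx, hlt⟩ :=
    exists_card_nbrsIn_gt_of_not_hasSparsePair hG hA (Finset.sdiff_subset.trans hB) hAb hB'b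
  refine ⟨x, hx, nbrsIn G B' x, nbrsIn_subset.trans Finset.sdiff_subset,
    (mul_le_mul_of_nonneg_left hB'b hε).trans hlt.le, fun y hy ↦ ?_⟩
  simp only [B', mem_nbrsIn, Finset.mem_sdiff, Finset.mem_union, mem_coveredIn] at hy
  grind

/-- Add the vertices of `N` one by one until a proportion `α` of `X` or of `Y` is covered: the last
vertex overshoots by at most `δ`. -/
lemma exists_subset_card_coveredIn_le {N X Y : Finset V} {α δ : ℝ} (hα : 0 ≤ α) (hδ : 0 ≤ δ)
    (hX : SparseTo G δ N X) (hY : SparseTo G δ N Y)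
    (hN : α * #X ≤ #(coveredIn G X N) ∨ α * #Y ≤ #(coveredIn G Y N)) :
    ∃ T ⊆ N, (α * #X ≤ #(coveredIn G X T) ∨ α * #Y ≤ #(coveredIn G Y T)) ∧
      #(coveredIn G X T) ≤ (α + δ) * #X ∧ #(coveredIn G Y T) ≤ (α + δ) * #Y := by
  classical
  induction N using Finset.induction_on with
  | empty =>
    refine ⟨∅, subset_rfl, hN, ?_⟩
    simp only [coveredIn_empty, Finset.card_empty, Nat.cast_zero]
    constructor <;> positivity
  | insert t N _ ih =>
    have hsub := Finset.subset_insert t N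
    by_cases hN' : α * #X ≤ #(coveredIn G X N) ∨ α * #Y ≤ #(coveredIn G Y N)
    · obtain ⟨T, hTN, hT⟩ := ih (hX.mono_left hsub) (hY.mono_left hsub) hN'
      exact ⟨T, hTN.trans hsub, hT⟩
    · push Not at hN'
      have covered_le {B : Finset V} (hB : SparseTo G δ (insert t N) B)
          (hlt : #(coveredIn G B N) < α * #B) :
          #(coveredIn G B (insert t N)) ≤ (α + δ) * #B := by
        have hunion :
            (#(coveredIn G B (insert t N)) : ℝ) ≤ #(nbrsIn G B t) + #(coveredIn G B N) := by
          rw [coveredIn_insert]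
          exact_mod_cast Finset.card_union_le _ _
        linarith [hB t (Finset.mem_insert_self t N)]
      exact ⟨_, subset_rfl, hN, covered_le hX hN'.1, covered_le hY hN'.2⟩

lemma cycleGraph_five_isIndContained_of_partial_cover {W N T X Y : Finset V} {v : V} {ε b : ℝ}
    (hG : ¬HasSparsePair G W ε b) (hε : 0 ≤ ε) (hN : N ⊆ W) (hX : X ⊆ W) (hY : Y ⊆ W)
    (hNb : ε * b ≤ #N) (hXb : 16 * b ≤ #X) (hYb : 16 * b ≤ #Y) (hvN : ∀ x ∈ N, G.Adj v x)
    (hvX : #(nbrsIn G X v) ≤ (1 / 32 : ℝ) * #X) (hvY : #(nbrsIn G Y v) ≤ (1 / 32 : ℝ) * #Y)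
    (hNX : SparseTo G (1 / 32) N X) (hYX : SparseTo G (1 / 32) Y X) (hTN : T ⊆ N)
    (hTX : (1 / 4 : ℝ) * #X ≤ #(coveredIn G X T))
    (hTX' : #(coveredIn G X T) ≤ (1 / 4 + 1 / 32 : ℝ) * #X)
    (hTY : #(coveredIn G Y T) ≤ (1 / 4 + 1 / 32 : ℝ) * #Y) : cycleGraph 5 ⊴ G := by
  classical
  obtain ⟨p, hp, P, hPY, hPb, hP⟩ : ∃ p ∈ N, ∃ P ⊆ Y, ε * b ≤ #P ∧
      ∀ y ∈ P, G.Adj p y ∧ ¬G.Adj v y ∧ ∀ t ∈ T, ¬G.Adj t y :=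
    exists_uncovered_neighbors hG hε hN hY hNb v (by linarith)
  -- `T₁` or `T₂` covers an eighth of `X`: `T₂` closes a cycle through `v p`, while `T₁` closes one
  -- through `p u` with `u ∈ P`.
  set T₁ := {t ∈ T | G.Adj p t}
  set T₂ := {t ∈ T | ¬G.Adj p t}
  have covered_split : (#(coveredIn G X T) : ℝ) ≤ #(coveredIn G X T₁) + #(coveredIn G X T₂) := by
    rw [← Finset.filter_union_filter_not_eq (fun t ↦ G.Adj p t) T, coveredIn_union]
    exact_mod_cast Finset.card_union_le _ _
  by_cases hT₂ : (1 / 8 : ℝ) * #X ≤ #(coveredIn G X T₂)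
  · have mem_T₂ {t : V} (ht : t ∈ T₂) : t ∈ T ∧ ¬G.Adj p t := Finset.mem_filter.1 ht
    exact cycleGraph_five_isIndContained_of_cover hG hε (hvN p hp)
      (fun t ht ↦ ⟨hvN t (hTN (mem_T₂ ht).1), (mem_T₂ ht).2⟩)
      (fun y hy ↦ ⟨(hP y hy).1, (hP y hy).2.1⟩) (fun t ht y hy ↦ (hP y hy).2.2 t (mem_T₂ ht).1)
      (hPY.trans hY) hX hPb (by linarith [hNX p hp])
  · obtain ⟨u, hu, M, hMX, hMb, hM⟩ : ∃ u ∈ P, ∃ M ⊆ X, ε * b ≤ #M ∧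
        ∀ y ∈ M, G.Adj u y ∧ ¬G.Adj p y ∧ ∀ t ∈ T, ¬G.Adj t y :=
      exists_uncovered_neighbors hG hε (hPY.trans hY) hX hPb p (by linarith [hNX p hp])
    have mem_T₁ {t : V} (ht : t ∈ T₁) : t ∈ T ∧ G.Adj p t := Finset.mem_filter.1 ht
    exact cycleGraph_five_isIndContained_of_cover hG hε (hP u hu).1
      (fun t ht ↦ ⟨(mem_T₁ ht).2, fun h ↦ (hP u hu).2.2 t (mem_T₁ ht).1 h.symm⟩)
      (fun y hy ↦ ⟨(hM y hy).1, (hM y hy).2.1⟩) (fun t ht y hy ↦ (hM y hy).2.2 t (mem_T₁ ht).1)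
      (hMX.trans hX) hX hMb (by linarith [hNX p hp, hYX u (hPY hu)])

lemma cycleGraph_five_isIndContained_of_sparseTo {W X Y Z : Finset V} {ε b : ℝ} (hε0 : 0 ≤ ε)
    (hε1 : ε ≤ 1) (hG : ¬HasSparsePair G W ε b) (hX : X ⊆ W) (hY : Y ⊆ W) (hZ : Z ⊆ W)
    (hXb : 16 * b ≤ #X) (hYb : 16 * b ≤ #Y) (hZb : b ≤ #Z) (hZX : SparseTo G (1 / 32) Z X)
    (hZY : SparseTo G (1 / 32) Z Y) (hXY : SparseTo G (1 / 32) X Y)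
    (hYX : SparseTo G (1 / 32) Y X) : cycleGraph 5 ⊴ G := by
  classical
  have hb : 0 < b := pos_of_not_hasSparsePair hG hε0
  obtain ⟨v, hv, hvZ⟩ := exists_card_nbrsIn_gt_of_not_hasSparsePair hG hZ hZ (by nlinarith) hZb
  set N := nbrsIn G Z v
  have hNZ : N ⊆ Z := nbrsIn_subset
  have hN : ε * b ≤ #N := (mul_le_mul_of_nonneg_left hZb hε0).trans hvZ.le
  have covers : (1 / 4 : ℝ) * #X ≤ #(coveredIn G X N) := by
    by_contra! hlt
    have : (#X : ℝ) ≤ #(X \ coveredIn G X N) + #(coveredIn G X N) :=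
      mod_cast Finset.card_le_card_sdiff_add_card
    obtain ⟨x, hx, y, hy, hxy⟩ := exists_adj_of_not_hasSparsePair hG hε0 (hNZ.trans hZ)
      (Finset.sdiff_subset.trans hX : X \ coveredIn G X N ⊆ W) hN (by linarith)
    rw [Finset.mem_sdiff] at hy
    exact hy.2 (mem_coveredIn.2 ⟨hy.1, x, hx, hxy⟩)
  have hNX := hZX.mono_left hNZ
  have hNY := hZY.mono_left hNZ
  have hvN (x : V) (hx : x ∈ N) : G.Adj v x := (mem_nbrsIn.1 hx).2
  obtain ⟨T, hTN, hT | hT, hTX, hTY⟩ := exists_subset_card_coveredIn_le (by norm_num) (by norm_num)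
    hNX hNY (.inl covers)
  · exact cycleGraph_five_isIndContained_of_partial_cover hG hε0 (hNZ.trans hZ) hX hY hN hXb hYb hvN
      (hZX v hv) (hZY v hv) hNX hYX hTN hT hTX hTY
  · exact cycleGraph_five_isIndContained_of_partial_cover hG hε0 (hNZ.trans hZ) hY hX hN hYb hXb hvN
      (hZY v hv) (hZX v hv) hNY hXY hTN hT hTY hTX

lemma HasSparseBlocks.hasSparsePair {W : Finset V} {ε m : ℝ} (hε0 : 0 ≤ ε) (hε1 : ε ≤ 1)
    (hG : ¬cycleGraph 5 ⊴ G) (h : HasSparseBlocks G W (1 / 128) m 3) :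
    HasSparsePair G W ε (m / 32) := by
  by_contra hno
  have hm : 0 < m := by linarith [pos_of_not_hasSparsePair hno hε0]
  obtain ⟨l, hlen, hsparse, hl⟩ := h
  obtain ⟨Z, X, Y, rfl⟩ := List.length_eq_three.1 hlen
  simp only [List.pairwise_cons, List.mem_cons, List.not_mem_nil, or_false, forall_eq_or_imp,
    forall_eq] at hsparse hl
  obtain ⟨⟨hZX, hZY⟩, hXY, -⟩ := hsparse
  obtain ⟨⟨hZW, hZm⟩, ⟨hXW, hXm⟩, hYW, hYm⟩ := hl
  have hX : X.Nonempty := Finset.card_pos.1 (by exact_mod_cast hm.trans_le hXm)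
  obtain ⟨Y', hY'Y, hY'card, hY'X⟩ :=
    hXY.exists_subset_sparseTo_symm hX (by norm_num : (0 : ℝ) < 1 / 32)
  exact hG (cycleGraph_five_isIndContained_of_sparseTo hε0 hε1 hno hXW (hY'Y.trans hYW) hZW
    (by linarith) (by linarith) (by linarith) (hZX.subset_right subset_rfl (by linarith))
    (hZY.subset_right hY'Y (by linarith)) (hXY.subset_right hY'Y (by linarith)) hY'X)

/-- For all `W` and `ε ∈ (0, 1]`, in `G` or in its complement there is an `ε`-sparse pair
`A, B ⊆ W` with `|A| ≥ εc|W|` and `|B| ≥ c|W|`. The point is that `c` does not depend on `ε`. -/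
def SparsePairProperty (G : SimpleGraph V) (c : ℝ) : Prop :=
  ∀ (W : Finset V) (ε : ℝ), 0 < ε → ε ≤ 1 →
    HasSparsePair G W ε (c * #W) ∨ HasSparsePair Gᶜ W ε (c * #W)

theorem exists_sparsePairProperty_of_not_cycleGraph_five_isIndContained :
    ∃ c : ℝ, 0 < c ∧ c ≤ 1 ∧ ∀ {V : Type u} {G : SimpleGraph V}, ¬cycleGraph 5 ⊴ G →
      SparsePairProperty G c := by
  obtain ⟨c, hc0, hc1, blocks⟩ := exists_hasSparseBlocks_or_compl.{u} (cycleGraph 5)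
    (by norm_num : (0 : ℝ) < 1 / 128) (by norm_num) 3 3
  refine ⟨c / 32, by positivity, by linarith, fun {V G} hG W ε hε0 hε1 ↦ ?_⟩
  rw [div_mul_eq_mul_div]
  exact (blocks hG W).imp (·.hasSparsePair hε0.le hε1 hG)
    (·.hasSparsePair hε0.le hε1 (not_cycleGraph_five_isIndContained_compl hG))

/-! ### Growing cographs -/

/-- Every set of at least `m` vertices contains the vertex set of an induced cograph on exactly `t`
vertices. -/
def ForcesCograph (G : SimpleGraph V) (t : ℕ) (m : ℝ) : Prop :=
  ∀ W : Finset V, m ≤ #W → ∃ J ⊆ W, CographOn G J ∧ #J = t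

lemma ForcesCograph.mono {t t' : ℕ} {m m' : ℝ} (h : ForcesCograph G t m) (ht : t' ≤ t)
    (hm : m ≤ m') : ForcesCograph G t' m' := by
  intro W hW
  obtain ⟨J, hJW, hJ, rfl⟩ := h W (hm.trans hW)
  obtain ⟨J', hJ'J, hJ'⟩ := Finset.exists_subset_card_eq ht
  exact ⟨J', hJ'J.trans hJW, hJ.mono hJ'J, hJ'⟩

lemma ForcesCograph.compl {t : ℕ} {m : ℝ} (h : ForcesCograph G t m) : ForcesCograph Gᶜ t m :=
  fun W hW ↦ (h W hW).imp fun _ hJ ↦ hJ.imp_right (And.imp_left CographOn.compl)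

lemma forcesCograph_of_lt_four {t : ℕ} (ht : t < 4) : ForcesCograph G t t := by
  intro W hW
  obtain ⟨J, hJW, hJ⟩ := Finset.exists_subset_card_eq (Nat.cast_le.1 hW)
  exact ⟨J, hJW, cographOn_of_card_lt_four (hJ ▸ ht), hJ⟩

lemma SparseTo.exists_disjoint_not_adj {ε : ℝ} {J B : Finset V} (h : SparseTo G ε J B) :
    ∃ B' ⊆ B, Disjoint J B' ∧ (∀ x ∈ J, ∀ y ∈ B', ¬G.Adj x y) ∧
      (#B : ℝ) ≤ #B' + (#J * (ε * #B) + #J) := by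
  classical
  refine ⟨B \ (coveredIn G B J ∪ J), Finset.sdiff_subset, ?_, fun x hx y hy hxy ↦ ?_, ?_⟩
  · exact Finset.disjoint_sdiff.mono_left Finset.subset_union_right
  · rw [Finset.mem_sdiff, Finset.mem_union, not_or] at hy
    exact hy.2.1 (mem_coveredIn.2 ⟨hy.1, x, hx, hxy⟩)
  · calc (#B : ℝ) ≤ #(B \ (coveredIn G B J ∪ J)) + (#(coveredIn G B J) + #J) :=
          mod_cast card_le_card_sdiff_union_add _ _ _
      _ ≤ #(B \ (coveredIn G B J ∪ J)) + (#J * (ε * #B) + #J) := by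
          gcongr
          exact h.card_coveredIn_le

lemma HasSparsePair.exists_cographOn {W : Finset V} {t t' : ℕ} {m m' b : ℝ} (ht : 0 < t)
    (hm : 1 ≤ m) (h : ForcesCograph G t m) (h' : ForcesCograph G t' m') (hb : 4 * t * m ≤ b)
    (hb' : 2 * m' ≤ b) (hW : HasSparsePair G W (1 / (4 * t)) b) :
    ∃ J ⊆ W, CographOn G J ∧ #J = t + t' := by
  classical
  obtain ⟨A, hA, B, hB, hAb, hBb, hAB⟩ := hW
  have ht0 : (0 : ℝ) < t := mod_cast ht
  have hAm : m ≤ #A := by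
    refine le_trans ?_ hAb
    rw [one_div_mul_eq_div, le_div_iff₀ (by positivity)]
    linarith
  obtain ⟨J, hJA, hJ, rfl⟩ := h A hAm
  obtain ⟨B', hB'B, hdisj, hnadj, hcard⟩ := (hAB.mono_left hJA).exists_disjoint_not_adj
  have hB' : m' ≤ #B' := by
    have quarter : (#J : ℝ) * (1 / (4 * #J) * #B) = #B / 4 := by field_simp
    have : 4 * (#J : ℝ) ≤ 4 * #J * m := le_mul_of_one_le_right (by positivity) hm
    linarith
  obtain ⟨J', hJ'B, hJ', rfl⟩ := h' B' hB'
  refine ⟨J ∪ J', Finset.union_subset (hJA.trans hA) ((hJ'B.trans hB'B).trans hB), ?_,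
    Finset.card_union_of_disjoint (hdisj.mono_right hJ'B)⟩
  rw [Finset.coe_union]
  exact hJ.union hJ' fun x hx y hy ↦ hnadj x hx y (hJ'B hy)

lemma ForcesCograph.add {c : ℝ} (hG : SparsePairProperty G c) (hc : 0 ≤ c) {t t' : ℕ}
    {m m' M : ℝ} (ht : 0 < t) (hm : 1 ≤ m) (h : ForcesCograph G t m) (h' : ForcesCograph G t' m')
    (hM : 4 * t * m ≤ c * M) (hM' : 2 * m' ≤ c * M) : ForcesCograph G (t + t') M := by
  intro W hW
  have hcM : c * M ≤ c * #W := by gcongr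
  have hε : 1 / (4 * (t : ℝ)) ≤ 1 := by
    have : (1 : ℝ) ≤ t := mod_cast ht
    exact div_le_one_of_le₀ (by linarith) (by positivity)
  rcases hG W (1 / (4 * t)) (by positivity) hε with hpair | hpair
  · exact hpair.exists_cographOn ht hm h h' (hM.trans hcM) (hM'.trans hcM)
  · obtain ⟨J, hJW, hJ, hJcard⟩ :=
      hpair.exists_cographOn ht hm h.compl h'.compl (hM.trans hcM) (hM'.trans hcM)
    exact ⟨J, hJW, by simpa using hJ.compl, hJcard⟩

lemma ForcesCograph.mul {c : ℝ} (hG : SparsePairProperty G c) (hc0 : 0 < c) (hc1 : c ≤ 1) {t : ℕ}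
    {m : ℝ} (ht : 0 < t) (hm : 1 ≤ m) (h : ForcesCograph G t m) (k : ℕ) :
    ForcesCograph G (k * t) (4 * t * m / c * (2 / c) ^ k) := by
  induction k with
  | zero =>
    exact (forcesCograph_of_lt_four (by norm_num : 0 < 4)).mono (Nat.zero_mul t).le
      (by push_cast; positivity)
  | succ k ih =>
    have one_le_pow : 1 ≤ (2 / c) ^ (k + 1) :=
      one_le_pow₀ ((one_le_div hc0).2 (by linarith))
    rw [add_one_mul, add_comm]
    refine h.add hG hc0.le ht hm ih ?_ (le_of_eq ?_)
    · calc 4 * t * m ≤ 4 * t * m * (2 / c) ^ (k + 1) :=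
            le_mul_of_one_le_right (by positivity) one_le_pow
        _ = c * (4 * t * m / c * (2 / c) ^ (k + 1)) := by field_simp
    · rw [pow_succ]
      field_simp

lemma SparsePairProperty.forcesCograph {c : ℝ} (hG : SparsePairProperty G c) (hc0 : 0 < c)
    (hc1 : c ≤ 1) {C k : ℕ} (hC : 16 / c ^ 2 ≤ (2 : ℝ) ^ C) (hk : 1 ≤ k) (r : ℕ) :
    ForcesCograph G (min (k ^ r) (2 ^ k)) (2 ^ (C * k * r)) := by
  induction r with
  | zero => exact (forcesCograph_of_lt_four (by norm_num : 1 < 4)).mono (by simp) (by simp)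
  | succ r ih =>
    rcases le_total (k ^ r) (2 ^ k) with hle | hle
    · rw [min_eq_left hle] at ih
      refine (ih.mul hG hc0 hc1 (by positivity) (one_le_pow₀ one_le_two) k).mono
        ((min_le_left _ _).trans_eq (pow_succ' k r)) ?_
      have four_div_le : 4 / c ≤ (4 / c) ^ k :=
        le_self_pow₀ ((one_le_div hc0).2 (by linarith)) (by lia)
      have pow_le : ((k ^ r : ℕ) : ℝ) ≤ 2 ^ k := mod_cast hle
      calc 4 * ((k ^ r : ℕ) : ℝ) * 2 ^ (C * k * r) / c * (2 / c) ^ k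
          = 4 / c * (k ^ r : ℕ) * (2 / c) ^ k * 2 ^ (C * k * r) := by ring
        _ ≤ (4 / c) ^ k * 2 ^ k * (2 / c) ^ k * 2 ^ (C * k * r) := by gcongr
        _ = (16 / c ^ 2) ^ k * 2 ^ (C * k * r) := by
            rw [← mul_pow, ← mul_pow]
            congr 2
            ring
        _ ≤ (2 ^ C) ^ k * 2 ^ (C * k * r) := by gcongr
        _ = 2 ^ (C * k * (r + 1)) := by ring
    · rw [min_eq_right hle] at ih
      exact ih.mono (min_le_right _ _) (pow_le_pow_right₀ one_le_two (by gcongr; lia))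

theorem exists_forcesCograph_of_not_cycleGraph_five_isIndContained :
    ∃ C : ℕ, 1 ≤ C ∧ ∀ {V : Type u} {G : SimpleGraph V}, ¬cycleGraph 5 ⊴ G → ∀ k r : ℕ, 1 ≤ k →
      ForcesCograph G (min (k ^ r) (2 ^ k)) (2 ^ (C * k * r)) := by
  obtain ⟨c, hc0, hc1, hpair⟩ := exists_sparsePairProperty_of_not_cycleGraph_five_isIndContained.{u}
  obtain ⟨C, hC⟩ := pow_unbounded_of_one_lt (16 / c ^ 2) one_lt_two
  have hC' : 16 / c ^ 2 ≤ (2 : ℝ) ^ (C + 1) :=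
    hC.le.trans (pow_le_pow_right₀ one_le_two C.le_succ)
  exact ⟨C + 1, by lia, fun hG k r hk ↦ (hpair hG).forcesCograph hc0 hc1 hC' hk r⟩

/-! ### Choice of parameters -/

lemma logb_two_le_self {x : ℝ} (hx : 1 ≤ x) : Real.logb 2 x ≤ x := by
  rw [Real.logb_le_iff_le_rpow one_lt_two (by linarith)]
  have := one_add_mul_self_le_rpow_one_add (by norm_num : (-1 : ℝ) ≤ 1) hx
  norm_num at this
  linarith

lemma logb_two_sqrt {x : ℝ} (hx : 0 ≤ x) : Real.logb 2 √x = Real.logb 2 x / 2 := by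
  rw [Real.logb, Real.log_sqrt hx, div_right_comm, Real.logb]

lemma logb_two_le_two_mul_sqrt {x : ℝ} (hx : 1 ≤ x) : Real.logb 2 x ≤ 2 * √x :=
  calc Real.logb 2 x = 2 * Real.logb 2 √x := by
        rw [logb_two_sqrt (by linarith), mul_div_cancel₀ _ two_ne_zero]
    _ ≤ 2 * √x := by gcongr; exact logb_two_le_self (Real.one_le_sqrt.2 hx)

lemma sqrt_mul_logb_le_self {x : ℝ} (hx : 1 ≤ x) : √(x * Real.logb 2 x) ≤ x :=
  calc √(x * Real.logb 2 x) ≤ √(x * x) := by gcongr; exact logb_two_le_self hx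
    _ = x := Real.sqrt_mul_self (by linarith)

lemma two_mul_sqrt_le_sqrt_mul_logb {x : ℝ} (hx : 16 ≤ x) : 2 * √x ≤ √(x * Real.logb 2 x) := by
  have hx0 : 0 < x := by linarith
  have four_le : 4 ≤ Real.logb 2 x :=
    (Real.le_logb_iff_rpow_le one_lt_two hx0).2 (by norm_num; linarith)
  refine Real.le_sqrt_of_sq_le ?_
  calc (2 * √x) ^ 2 = x * 4 := by rw [mul_pow, Real.sq_sqrt hx0.le]; ring
    _ ≤ x * Real.logb 2 x := by gcongr

lemma mul_sqrt_mul_logb_le {C x : ℝ} (hx : 1 ≤ x) (hCx : 4 * C ^ 4 ≤ x) :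
    C * √(x * Real.logb 2 x) ≤ x := by
  have hx0 : 0 < x := by linarith
  have le_sqrt : 2 * C ^ 2 ≤ √x := Real.le_sqrt_of_sq_le (by linarith)
  refine le_of_sq_le_sq ?_ hx0.le
  calc (C * √(x * Real.logb 2 x)) ^ 2 = C ^ 2 * Real.logb 2 x * x := by
        rw [mul_pow, Real.sq_sqrt (mul_nonneg hx0.le (Real.logb_nonneg one_lt_two hx))]
        ring
    _ ≤ C ^ 2 * (2 * √x) * x := by gcongr; exact logb_two_le_two_mul_sqrt hx
    _ = 2 * C ^ 2 * √x * x := by ring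
    _ ≤ √x * √x * x := by gcongr
    _ = x ^ 2 := by rw [Real.mul_self_sqrt hx0.le]; ring

/-- With `R = √(x log x)`, the choice `k ≈ R` and `r ≈ x / (C * R)` balances `k` against
`r * log k`. -/
lemma exists_growth_parameters {C x : ℝ} (hC : 1 ≤ C) (hx : 16 * C ^ 4 < x) :
    ∃ k r : ℕ, 1 ≤ k ∧ C * k * r ≤ x ∧ √(x * Real.logb 2 x) / (4 * C) ≤ k ∧
      √(x * Real.logb 2 x) / (4 * C) ≤ r * Real.logb 2 k := by
  have hx16 : 16 ≤ x := by linarith [one_le_pow₀ hC (n := 4)]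
  have hx0 : 0 < x := by linarith
  set R := √(x * Real.logb 2 x)
  have sqrt_le_R : 2 * √x ≤ R := two_mul_sqrt_le_sqrt_mul_logb hx16
  have one_le_sqrt : 1 ≤ √x := Real.one_le_sqrt.2 (by linarith)
  have CR_le : C * R ≤ x := mul_sqrt_mul_logb_le (by linarith) (by linarith)
  set k := ⌊R⌋₊
  have half_le_k : R / 2 ≤ k := (Nat.div_two_lt_floor (by linarith)).le
  have k_le : (k : ℝ) ≤ R := Nat.floor_le (by positivity)
  have one_le_k : (1 : ℝ) ≤ k := by linarith
  have half_le_logb_k : Real.logb 2 x / 2 ≤ Real.logb 2 k :=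
    calc Real.logb 2 x / 2 = Real.logb 2 √x := (logb_two_sqrt hx0.le).symm
      _ ≤ Real.logb 2 k := Real.logb_le_logb_of_le one_lt_two (by linarith) (by linarith)
  set r := ⌊x / (C * k)⌋₊
  have Ck_le : C * k ≤ C * R := by gcongr
  have half_le_r : x / (C * R) / 2 ≤ r :=
    calc x / (C * R) / 2 ≤ x / (C * k) / 2 := by gcongr
      _ ≤ r := (Nat.div_two_lt_floor ((one_le_div (by positivity)).2 (Ck_le.trans CR_le))).le
  refine ⟨k, r, mod_cast one_le_k, ?_, ?_, ?_⟩
  · calc C * k * r ≤ C * k * (x / (C * k)) := by gcongr; exact Nat.floor_le (by positivity)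
      _ = x := by field_simp
  · refine le_trans ?_ half_le_k
    gcongr
    linarith
  · have hR0 : 0 < R := by linarith
    have R_sq : R ^ 2 = x * Real.logb 2 x := Real.sq_sqrt (Real.sqrt_pos.1 hR0).le
    have logb_nonneg : 0 ≤ Real.logb 2 x := Real.logb_nonneg one_lt_two (by linarith)
    calc R / (4 * C) = x / (C * R) / 2 * (Real.logb 2 x / 2) := by field_simp; linarith
      _ ≤ r * Real.logb 2 k := by gcongr

lemma two_rpow_le_min_pow {a : ℝ} {k r : ℕ} (hk : 1 ≤ k) (hak : a ≤ k)
    (har : a ≤ r * Real.logb 2 k) : (2 : ℝ) ^ a ≤ (min (k ^ r) (2 ^ k) : ℕ) := by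
  have two_rpow_logb : (2 : ℝ) ^ Real.logb 2 k = k :=
    Real.rpow_logb two_pos (by norm_num) (mod_cast hk)
  push_cast
  refine le_min ?_ ?_
  · calc (2 : ℝ) ^ a ≤ 2 ^ (Real.logb 2 k * r) :=
          Real.rpow_le_rpow_of_exponent_le one_le_two (by linarith)
      _ = k ^ r := by rw [Real.rpow_mul_natCast zero_le_two, two_rpow_logb]
  · calc (2 : ℝ) ^ a ≤ 2 ^ (k : ℝ) := Real.rpow_le_rpow_of_exponent_le one_le_two hak
      _ = 2 ^ k := Real.rpow_natCast _ _

theorem c5_free_large_cograph_general :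
    ∃ c : ℝ, 0 < c ∧ ∀ {V : Type u} [Fintype V] (G : SimpleGraph V), 1 < Fintype.card V →
      ¬cycleGraph 5 ⊴ G → ∃ s : Finset V, ¬pathGraph 4 ⊴ G.induce (s : Set V) ∧
        (2 : ℝ) ^ (c * √(Real.logb 2 (Fintype.card V) *
          Real.logb 2 (Real.logb 2 (Fintype.card V)))) ≤ #s := by
  obtain ⟨C, hC, forces⟩ := exists_forcesCograph_of_not_cycleGraph_five_isIndContained.{u}
  have hC1 : (1 : ℝ) ≤ C := mod_cast hC
  refine ⟨1 / (16 * C ^ 4), by positivity, fun {V} _ G hV hG ↦ ?_⟩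
  have hV2 : (2 : ℝ) ≤ Fintype.card V := mod_cast hV
  set x := Real.logb 2 (Fintype.card V)
  have two_rpow_x : (2 : ℝ) ^ x = Fintype.card V :=
    Real.rpow_logb two_pos (by norm_num) (by linarith)
  have one_le_x : 1 ≤ x := (Real.le_logb_iff_rpow_le one_lt_two (by linarith)).2 (by simpa)
  set R := √(x * Real.logb 2 x)
  suffices h : ∃ t : ℕ, (2 : ℝ) ^ (1 / (16 * C ^ 4) * R) ≤ t ∧ ∃ m : ℝ, m ≤ Fintype.card V ∧
      ForcesCograph G t m by
    obtain ⟨t, ht, m, hm, hGt⟩ := h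
    obtain ⟨s, -, hs, rfl⟩ := hGt Finset.univ hm
    exact ⟨s, hs, ht⟩
  by_cases hx : x ≤ 16 * C ^ 4
  · have exponent_le : 1 / (16 * C ^ 4) * R ≤ 1 := by
      rw [one_div_mul_eq_div]
      exact div_le_one_of_le₀ ((sqrt_mul_logb_le_self one_le_x).trans hx) (by positivity)
    exact ⟨2, by simpa using Real.rpow_le_rpow_of_exponent_le one_le_two exponent_le, 2, hV2,
      forcesCograph_of_lt_four (by norm_num)⟩
  · obtain ⟨k, r, hk, hkr, hRk, hRr⟩ := exists_growth_parameters hC1 (not_le.1 hx)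
    have exponent_le : 1 / (16 * C ^ 4) * R ≤ R / (4 * C) := by
      rw [one_div_mul_eq_div]
      gcongr
      · norm_num
      · exact le_self_pow₀ hC1 (by norm_num)
    have threshold_le : (2 : ℝ) ^ (C * k * r) ≤ Fintype.card V := by
      rw [← two_rpow_x, ← Real.rpow_natCast]
      exact Real.rpow_le_rpow_of_exponent_le one_le_two (mod_cast hkr)
    exact ⟨_, two_rpow_le_min_pow hk (exponent_le.trans hRk) (exponent_le.trans hRr), _,
      threshold_le, forces hG k r hk⟩

end

/-- There is `c > 0` such that every `C₅`-free graph on `n > 1` vertices contains an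
induced cograph on at least `2 ^ (c√(log n · log log n))` vertices (logs base 2). -/
theorem c5_free_large_cograph :
    ∃ c : ℝ, 0 < c ∧
      ∀ (n : ℕ) (G : SimpleGraph (Fin n)), 1 < n → C5Free G →
        ∃ s : Finset (Fin n), IsCograph (G.induce (s : Set (Fin n))) ∧
          (2 : ℝ) ^ (c * Real.sqrt (Real.logb 2 n * Real.logb 2 (Real.logb 2 n))) ≤
            (s.card : ℝ) := by
  obtain ⟨c, hc, large⟩ := c5_free_large_cograph_general
  exact ⟨c, hc, fun n G hn hG ↦ by
    simpa [IsCograph, IsIndContained] using large G (by simpa using hn) hG⟩
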